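/- Let n ≥ 1 and let Q ⊆ ℝ^n × ℝ be an open set satisfying condition (B). Then every X₀ ∈ ∂_p Q satisfies Wiener's criterion: for every λ > 1, the series ∑_{k=1}^∞ λ^k · cap(Q^c ∩ {X ∈ ℝ^n × ℝ : λ^{k+1} ≥ F(X₀ − X) ≥ λ^k}) diverges to +∞, where Q^c denotes the complement of Q in ℝ^n × ℝ. -/

import Mathlib

/-!
For `r > 0` let `T` be the time with `(4πT)^(-n/2) = r`. The heat ball `{F(X₀ - ·) ≥ r}` lies in a
time slab of length `T`, and `F(X - ·)` has integral at most `T` over such a slab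
(`lintegral_heatF_slab`). Hence, for a measurable `K` in this heat ball, Lebesgue measure on `K`
divided by `T` is admissible for the thermal capacity, so `|K| / T ≤ cap K`
(`volume_le_thermalCap`).

Given `lam > 1`, let `k₀` come from condition (B), `Λ = lam ^ k₀` and `r = Λ ^ k`. The shell
`Λ ^ k ≤ F ≤ Λ ^ (k + 1)` is covered by `k₀` consecutive `lam`-shells, all inside the heat ball of
level `r`, so the corresponding terms of the Wiener series add up to at least
`(r / T) * |shell \ Q| ≥ θ₁ * (r / T) * |shell|`. By parabolic scaling `(r / T) * |shell|` is bounded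
below by a positive constant independent of `k` (`volume_heatShell_ge`). The series therefore
contains infinitely many disjoint blocks of terms each summing to at least a fixed positive
constant, and diverges.
-/

open MeasureTheory Real Set Metric Filter

noncomputable section

/-- The space ℝ^n × ℝ (spatial × time). -/
abbrev Spc (n : ℕ) := EuclideanSpace ℝ (Fin n) × ℝ

/-- Parabolic cylinder C_r(Y) = B_r(y) × (s - r², s). -/
def pCyl (n : ℕ) (Y : Spc n) (r : ℝ) : Set (Spc n) :=
  (Metric.ball Y.1 r) ×ˢ (Set.Ioo (Y.2 - r ^ 2) Y.2)

/-- |C_r|: the measure of a parabolic cylinder of radius r. -/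
def cylVol (n : ℕ) (r : ℝ) : ENNReal :=
  volume (pCyl n ((0 : EuclideanSpace ℝ (Fin n)), (0 : ℝ)) r)

/-- The parabolic boundary of an open set Q. -/
def pBoundary (n : ℕ) (Q : Set (Spc n)) : Set (Spc n) :=
  {X | X ∈ frontier Q ∧ ∃ δ > (0 : ℝ), ∃ γ : ℝ → EuclideanSpace ℝ (Fin n),
    ContinuousOn γ (Set.Ico X.2 (X.2 + δ)) ∧ γ X.2 = X.1 ∧
    ∀ t ∈ Set.Ioo X.2 (X.2 + δ), (γ t, t) ∈ Q}

/-- Condition (A): exterior measure condition. -/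
def condA (n : ℕ) (Q : Set (Spc n)) (θ₀ : ℝ) : Prop :=
  ∀ X ∈ pBoundary n Q, ∀ r > (0 : ℝ),
    ENNReal.ofReal θ₀ * cylVol n r < volume (pCyl n X r \ Q)

/-- Parabolic distance. -/
def pDist (n : ℕ) (X Y : Spc n) : ℝ := max ‖X.1 - Y.1‖ (Real.sqrt |X.2 - Y.2|)

/-- The fundamental solution of the heat equation. -/
def heatF (n : ℕ) (x : EuclideanSpace ℝ (Fin n)) (t : ℝ) : ℝ :=
  if 0 < t then (4 * π * t) ^ (-(n : ℝ) / 2) * Real.exp (-‖x‖ ^ 2 / (4 * t)) else 0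

/-- Heat ball E(X, r). -/
def heatBall (n : ℕ) (X : Spc n) (r : ℝ) : Set (Spc n) :=
  {Y | r ≤ heatF n (X.1 - Y.1) (X.2 - Y.2)}

/-- Thermal capacity of a set. -/
def thermalCap (n : ℕ) (K : Set (Spc n)) : ENNReal :=
  sSup {m : ENNReal | ∃ μ : Measure (Spc n), IsFiniteMeasure μ ∧ μ Kᶜ = 0 ∧
    (∀ X : Spc n, ∫⁻ Y, ENNReal.ofReal (heatF n (X.1 - Y.1) (X.2 - Y.2)) ∂μ ≤ 1) ∧
    m = μ Set.univ}

/-- Heat shell {Y : a ≤ F(Y₀ - Y) ≤ b}. -/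
def heatShell (n : ℕ) (Y₀ : Spc n) (a b : ℝ) : Set (Spc n) :=
  {Y | a ≤ heatF n (Y₀.1 - Y.1) (Y₀.2 - Y.2) ∧ heatF n (Y₀.1 - Y.1) (Y₀.2 - Y.2) ≤ b}


/-- Condition (B). -/
def condB (n : ℕ) (Q : Set (Spc n)) : Prop :=
  ∃ θ₁ ∈ Set.Ioo (0 : ℝ) 1, ∀ Y₀ ∈ pBoundary n Q, ∀ lam : ℝ, 1 < lam →
    ∃ k₀ : ℕ, 0 < k₀ ∧ ∀ k : ℕ, 1 ≤ k →
      ENNReal.ofReal θ₁ *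
          volume (heatShell n Y₀ ((lam ^ k₀) ^ k) ((lam ^ k₀) ^ (k + 1))) ≤
        volume (heatShell n Y₀ ((lam ^ k₀) ^ k) ((lam ^ k₀) ^ (k + 1)) \ Q)

lemma measurable_heatF_sub (n : ℕ) (X : Spc n) :
    Measurable fun Y : Spc n => heatF n (X.1 - Y.1) (X.2 - Y.2) := by
  unfold heatF
  refine Measurable.ite (measurableSet_lt measurable_const (by fun_prop)) ?_ measurable_const
  fun_prop

lemma measurableSet_heatShell (n : ℕ) (X : Spc n) (a b : ℝ) :
    MeasurableSet (heatShell n X a b) :=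
  (measurableSet_le measurable_const (measurable_heatF_sub n X)).inter
    (measurableSet_le (measurable_heatF_sub n X) measurable_const)

lemma lintegral_heatF_space (n : ℕ) (x : EuclideanSpace ℝ (Fin n)) (t : ℝ) :
    ∫⁻ y, ENNReal.ofReal (heatF n (x - y) t) ≤ 1 := by
  by_cases ht : 0 < t
  swap
  · simp [heatF, ht]
  have hb : (0 : ℝ) < 1 / (4 * t) := by positivity
  have h1 := GaussianFourier.integral_rexp_neg_mul_sq_norm (V := EuclideanSpace ℝ (Fin n)) hb
  rw [lintegral_sub_left_eq_self (μ := (volume : Measure (EuclideanSpace ℝ (Fin n))))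
    (fun z => ENNReal.ofReal (heatF n z t)) x]
  have hF : ∀ z, heatF n z t =
      (4 * π * t) ^ (-(n : ℝ) / 2) * Real.exp (-(1 / (4 * t)) * ‖z‖ ^ 2) := by
    intro z
    simp only [heatF, if_pos ht]
    congr 2
    ring
  have hpos : (0 : ℝ) < π / (1 / (4 * t)) := by positivity
  have hint : Integrable
      (fun z : EuclideanSpace ℝ (Fin n) => Real.exp (-(1 / (4 * t)) * ‖z‖ ^ 2)) := by
    refine Integrable.of_integral_ne_zero ?_
    rw [h1]
    exact (Real.rpow_pos_of_pos hpos _).ne'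
  simp_rw [hF]
  rw [← ofReal_integral_eq_lintegral_ofReal (hint.const_mul _)
    (ae_of_all _ fun z => by positivity), integral_const_mul, h1, finrank_euclideanSpace_fin]
  have e : π / (1 / (4 * t)) = 4 * π * t := by field_simp
  rw [e, ← Real.rpow_add (by positivity), neg_div, neg_add_cancel, Real.rpow_zero]
  simp

lemma lintegral_heatF_slab (n : ℕ) (X : Spc n) (a b : ℝ) :
    ∫⁻ Y in (univ ×ˢ Icc a b : Set (Spc n)), ENNReal.ofReal (heatF n (X.1 - Y.1) (X.2 - Y.2))
      ≤ ENNReal.ofReal (b - a) := by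
  rw [Measure.volume_eq_prod, ← Measure.prod_restrict, lintegral_prod_symm' _
    (measurable_heatF_sub n X).ennreal_ofReal]
  calc _ ≤ ∫⁻ _ in Icc a b, (1 : ENNReal) := by
        refine lintegral_mono fun s => ?_
        simpa using lintegral_heatF_space n X.1 (X.2 - s)
    _ = _ := by simp

/-- Points where `F ≥ (4πT)^(-n/2)` have time coordinate in `[0, T]`. -/
lemma heatF_time_bound {n : ℕ} (hn : 1 ≤ n) {T r : ℝ} (hT : 0 < T)
    (hr : (4 * π * T) ^ (-(n : ℝ) / 2) = r) {x : EuclideanSpace ℝ (Fin n)} {t : ℝ}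
    (h : r ≤ heatF n x t) : 0 ≤ t ∧ t ≤ T := by
  have hr0 : 0 < r := hr ▸ Real.rpow_pos_of_pos (by positivity) _
  have hn' : (0 : ℝ) < n := by exact_mod_cast hn
  unfold heatF at h
  split_ifs at h with ht
  · refine ⟨ht.le, ?_⟩
    by_contra! hTt
    have h1 : (4 * π * t) ^ (-(n : ℝ) / 2) < (4 * π * T) ^ (-(n : ℝ) / 2) :=
      Real.rpow_lt_rpow_of_neg (by positivity) (by gcongr) (by linarith)
    have h2 : Real.exp (-‖x‖ ^ 2 / (4 * t)) ≤ 1 :=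
      Real.exp_le_one_iff.2 (div_nonpos_of_nonpos_of_nonneg (by simp) (by positivity))
    have h3 := mul_le_of_le_one_right
      (Real.rpow_nonneg (by positivity : 0 ≤ 4 * π * t) (-(n : ℝ) / 2)) h2
    linarith
  · linarith

/-- Normalized Lebesgue measure is admissible for the capacity of a subset of a heat ball. -/
lemma volume_le_thermalCap {n : ℕ} (hn : 1 ≤ n) {T r : ℝ} (hT : 0 < T)
    (hr : (4 * π * T) ^ (-(n : ℝ) / 2) = r) (X₀ : Spc n) {K : Set (Spc n)}
    (hK : MeasurableSet K) (hsub : K ⊆ heatBall n X₀ r) :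
    (ENNReal.ofReal T)⁻¹ * volume K ≤ thermalCap n K := by
  have hr0 : 0 < r := hr ▸ Real.rpow_pos_of_pos (by positivity) _
  have hT0 : ENNReal.ofReal T ≠ 0 := by simpa using hT
  have hpot : ∀ X : Spc n,
      ∫⁻ Y in K, ENNReal.ofReal (heatF n (X.1 - Y.1) (X.2 - Y.2)) ≤ ENNReal.ofReal T := by
    intro X
    calc _ ≤ _ := lintegral_mono_set (t := univ ×ˢ Icc (X₀.2 - T) X₀.2) (fun Y hY => by
          have := heatF_time_bound hn hT hr (hsub hY)
          exact ⟨mem_univ _, by linarith, by linarith⟩)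
      _ ≤ _ := lintegral_heatF_slab n X _ _
      _ = _ := by ring_nf
  -- Chebyshev's inequality for the potential at `X₀` shows that `K` has finite measure.
  have hfin : volume K ≠ ⊤ := by
    have h1 : ENNReal.ofReal r * volume K ≤ ENNReal.ofReal T := by
      rw [← setLIntegral_const]
      exact (setLIntegral_mono (measurable_heatF_sub n X₀).ennreal_ofReal
        fun Y hY => ENNReal.ofReal_le_ofReal (hsub hY)).trans (hpot X₀)
    intro h
    rw [h, ENNReal.mul_top (by simpa using hr0)] at h1
    exact ENNReal.ofReal_ne_top (top_le_iff.1 h1)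
  refine le_sSup ⟨(ENNReal.ofReal T)⁻¹ • volume.restrict K, ⟨?_⟩, ?_, ?_, ?_⟩
  · simpa using ENNReal.mul_lt_top (ENNReal.inv_lt_top.2 (pos_iff_ne_zero.2 hT0)) hfin.lt_top
  · simp [Measure.restrict_apply hK.compl]
  · intro X
    rw [lintegral_smul_measure, smul_eq_mul]
    calc _ ≤ (ENNReal.ofReal T)⁻¹ * ENNReal.ofReal T := by gcongr; exact hpot X
      _ = 1 := ENNReal.inv_mul_cancel hT0 ENNReal.ofReal_ne_top
  · simp

/-- Parabolic scaling for shells: with `T = s² / (4π)` and `r = s^(-n)`, the ratio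
`(r / T) * |{r ≤ F ≤ r Λ}|` is bounded below independently of `s`. -/
lemma volume_heatShell_ge {n : ℕ} (hn : 1 ≤ n) {L : ℝ} (hL : 1 < L) :
    ∃ c : ENNReal, c ≠ 0 ∧ ∀ (X₀ : Spc n) (s : ℝ), 0 < s →
      c ≤ ENNReal.ofReal ((s ^ n)⁻¹) * ((ENNReal.ofReal (s ^ 2 / (4 * π)))⁻¹ *
        volume (heatShell n X₀ ((s ^ n)⁻¹) ((s ^ n)⁻¹ * L))) := by
  have hn' : (0 : ℝ) < n := by exact_mod_cast hn
  have hL0 : 0 < L := by linarith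
  have hlog : 0 < Real.log L := Real.log_pos hL
  -- The shell contains the cylinder `‖x‖ ≤ s d`, `A² ≤ t / T ≤ A`, on which the power factor of
  -- `F / r` is between `√L` and `L` and the exponential factor is at least `1 / √L`.
  set A : ℝ := L ^ (-(1 : ℝ) / n) with hA
  have hA0 : 0 < A := Real.rpow_pos_of_pos hL0 _
  have hA1 : A < 1 := Real.rpow_lt_one_of_one_lt_of_neg hL
    (div_neg_of_neg_of_pos (by norm_num) hn')
  set d : ℝ := A * √(Real.log L / (2 * π)) with hd
  have hd0 : 0 < d := by positivity
  have hAA : 0 < A - A ^ 2 := by nlinarith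
  refine ⟨ENNReal.ofReal (d ^ n * (A - A ^ 2)) *
    volume (Metric.ball (0 : EuclideanSpace ℝ (Fin n)) 1), ?_, ?_⟩
  · refine mul_ne_zero ?_ (Metric.measure_ball_pos _ _ one_pos).ne'
    simpa using by positivity
  intro X₀ s hs
  set T : ℝ := s ^ 2 / (4 * π) with hT
  have hT0 : 0 < T := by positivity
  have hsub : Metric.closedBall X₀.1 (s * d) ×ˢ Icc (X₀.2 - T * A) (X₀.2 - T * A ^ 2) ⊆
      heatShell n X₀ ((s ^ n)⁻¹) ((s ^ n)⁻¹ * L) := by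
    rintro ⟨y, u⟩ ⟨hy, hu1, hu2⟩
    simp only [Metric.mem_closedBall, dist_comm y, dist_eq_norm] at hy hu1 hu2
    obtain ⟨τ, hτ⟩ : ∃ τ, X₀.2 - u = T * τ := ⟨(X₀.2 - u) / T, by field_simp⟩
    have hτ1 : A ^ 2 ≤ τ := le_of_mul_le_mul_left (by linarith) hT0
    have hτ2 : τ ≤ A := le_of_mul_le_mul_left (by linarith) hT0
    have hτ0 : 0 < τ := lt_of_lt_of_le (by positivity) hτ1
    have hpow : (4 * π * (T * τ)) ^ (-(n : ℝ) / 2) = (s ^ n)⁻¹ * τ ^ (-(n : ℝ) / 2) := by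
      have : 4 * π * (T * τ) = s ^ 2 * τ := by rw [hT]; field_simp
      rw [this, Real.mul_rpow (by positivity) hτ0.le]
      congr 1
      rw [← Real.rpow_natCast s 2, ← Real.rpow_mul hs.le, ← Real.rpow_natCast s n,
        ← Real.rpow_neg hs.le]
      congr 1
      push_cast
      ring
    have hneg : -(n : ℝ) / 2 ≤ 0 := by linarith
    have hlow : L ^ ((1 : ℝ) / 2) ≤ τ ^ (-(n : ℝ) / 2) := by
      refine le_trans (le_of_eq ?_) (Real.rpow_le_rpow_of_nonpos hτ0 hτ2 hneg)
      rw [hA, ← Real.rpow_mul hL0.le]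
      congr 1
      field_simp
    have hupp : τ ^ (-(n : ℝ) / 2) ≤ L := by
      refine (Real.rpow_le_rpow_of_nonpos (by positivity) hτ1 hneg).trans (le_of_eq ?_)
      rw [hA, ← Real.rpow_natCast, ← Real.rpow_mul hL0.le, ← Real.rpow_mul hL0.le]
      convert Real.rpow_one L using 2
      push_cast
      field_simp
    have hexp1 : Real.exp (-‖X₀.1 - y‖ ^ 2 / (4 * (T * τ))) ≤ 1 :=
      Real.exp_le_one_iff.2 (div_nonpos_of_nonpos_of_nonneg (by simp) (by positivity))
    have hexp2 : L ^ (-((1 : ℝ) / 2)) ≤ Real.exp (-‖X₀.1 - y‖ ^ 2 / (4 * (T * τ))) := by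
      rw [Real.rpow_def_of_pos hL0, Real.exp_le_exp, neg_div, mul_neg, neg_le_neg_iff,
        div_le_iff₀ (by positivity)]
      calc ‖X₀.1 - y‖ ^ 2 ≤ (s * d) ^ 2 := by gcongr
        _ = Real.log L * (1 / 2) * (4 * (T * A ^ 2)) := by
          rw [hd, hT, mul_pow, mul_pow, Real.sq_sqrt (by positivity)]
          field_simp
        _ ≤ _ := by gcongr
    have hr0 : 0 < (s ^ n)⁻¹ := by positivity
    have hF : heatF n (X₀.1 - y) (X₀.2 - u) =
        (s ^ n)⁻¹ * τ ^ (-(n : ℝ) / 2) * Real.exp (-‖X₀.1 - y‖ ^ 2 / (4 * (T * τ))) := by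
      rw [heatF, hτ, if_pos (by positivity), hpow]
    constructor
    · change (s ^ n)⁻¹ ≤ heatF n (X₀.1 - y) (X₀.2 - u)
      rw [hF]
      calc (s ^ n)⁻¹ = (s ^ n)⁻¹ * L ^ ((1 : ℝ) / 2) * L ^ (-((1 : ℝ) / 2)) := by
            rw [mul_assoc, ← Real.rpow_add hL0, add_neg_cancel, Real.rpow_zero, mul_one]
        _ ≤ _ := by gcongr
    · change heatF n (X₀.1 - y) (X₀.2 - u) ≤ (s ^ n)⁻¹ * L
      rw [hF]
      calc _ ≤ (s ^ n)⁻¹ * L * 1 := by gcongr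
        _ = _ := mul_one _
  have hvol := measure_mono (μ := volume) hsub
  rw [Measure.volume_eq_prod, Measure.prod_prod, Real.volume_Icc,
    Measure.addHaar_closedBall _ _ (by positivity), finrank_euclideanSpace_fin] at hvol
  refine le_trans (le_of_eq ?_) (mul_le_mul_right (mul_le_mul_right hvol _) _)
  rw [← ENNReal.ofReal_inv_of_pos hT0]
  generalize volume (Metric.ball (0 : EuclideanSpace ℝ (Fin n)) 1) = v
  have e : d ^ n * (A - A ^ 2) =
      (s ^ n)⁻¹ * (T⁻¹ * ((s * d) ^ n * (X₀.2 - T * A ^ 2 - (X₀.2 - T * A)))) := by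
    rw [mul_pow]
    field_simp
    ring
  rw [e, ENNReal.ofReal_mul (by positivity), ENNReal.ofReal_mul (by positivity),
    ENNReal.ofReal_mul (by positivity)]
  ring

lemma exists_shell_index {lam F : ℝ} (a b : ℕ) (hb : 0 < b)
    (h1 : lam ^ a ≤ F) (h2 : F ≤ lam ^ (a + b)) :
    ∃ j < b, lam ^ (a + j) ≤ F ∧ F ≤ lam ^ (a + j + 1) := by
  induction b, hb using Nat.le_induction with
  | base => exact ⟨0, by simp, h1, h2⟩
  | succ b hb ih =>
    rcases le_total F (lam ^ (a + b)) with h | h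
    · obtain ⟨j, hj, h⟩ := ih h
      exact ⟨j, by omega, h⟩
    · exact ⟨b, by omega, h, h2⟩

/-- condition (B) implies Wiener's criterion at every point of the
parabolic boundary.  The series `∑_{k=1}^∞ λ^k cap(Qᶜ ∩ {λ^{k+1} ≥ F(X₀-X) ≥ λ^k})`
is written as a `tsum` over `k : ℕ` via the shift `k ↦ k+1`. -/
theorem condB_implies_wiener (n : ℕ) (hn : 1 ≤ n) (Q : Set (Spc n)) (hQ : IsOpen Q)
    (hB : condB n Q) :
    ∀ X₀ ∈ pBoundary n Q, ∀ lam : ℝ, 1 < lam →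
      ∑' k : ℕ, ENNReal.ofReal (lam ^ (k + 1)) *
        thermalCap n (Qᶜ ∩ heatShell n X₀ (lam ^ (k + 1)) (lam ^ (k + 2))) = ⊤ := by
  intro X₀ hX₀ lam hlam
  obtain ⟨θ, ⟨hθ0, -⟩, hθ⟩ := hB
  obtain ⟨k₀, hk₀, hk⟩ := hθ X₀ hX₀ lam hlam
  have hlam0 : 0 < lam := by linarith
  have hL : 1 < lam ^ k₀ := one_lt_pow₀ hlam hk₀.ne'
  obtain ⟨c, hc0, hc⟩ := volume_heatShell_ge hn hL
  by_contra hne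
  have htail := ENNReal.tendsto_sum_nat_add _ hne
  have hθc : 0 < ENNReal.ofReal θ * c :=
    pos_iff_ne_zero.2 (mul_ne_zero (by simpa using hθ0) hc0)
  obtain ⟨N, hN⟩ := eventually_atTop.1 (htail.eventually_lt_const hθc)
  -- The block starting at exponent `k₀ (N + 1)`, that is, at series index `k₀ (N + 1) - 1 ≥ N`.
  obtain ⟨i, hi⟩ : ∃ i, i + 1 = k₀ * (N + 1) :=
    ⟨k₀ * (N + 1) - 1, Nat.sub_add_cancel (Nat.mul_pos hk₀ N.succ_pos)⟩
  have hNi : N ≤ i := by nlinarith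
  refine absurd (hN i hNi) (not_lt.2 ?_)
  refine le_trans ?_ (ENNReal.sum_le_tsum (Finset.range k₀))
  set r : ℝ := lam ^ (i + 1) with hr
  have hr0 : 0 < r := by positivity
  have hn0 : (n : ℝ) ≠ 0 := by exact_mod_cast (by omega : n ≠ 0)
  obtain ⟨s, hs, hsr⟩ : ∃ s : ℝ, 0 < s ∧ (s ^ n)⁻¹ = r := by
    refine ⟨r ^ (-(1 : ℝ) / n), Real.rpow_pos_of_pos hr0 _, ?_⟩
    rw [← Real.rpow_natCast, ← Real.rpow_mul hr0.le, ← Real.rpow_neg hr0.le]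
    convert Real.rpow_one r using 2
    field_simp
  have hT0 : 0 < s ^ 2 / (4 * π) := by positivity
  have hTr : (4 * π * (s ^ 2 / (4 * π))) ^ (-(n : ℝ) / 2) = r := by
    have : 4 * π * (s ^ 2 / (4 * π)) = s ^ 2 := by field_simp
    rw [this, ← hsr, ← Real.rpow_natCast s 2, ← Real.rpow_mul hs.le, ← Real.rpow_natCast s n,
      ← Real.rpow_neg hs.le]
    congr 1
    push_cast
    ring
  have hcX := hc X₀ s hs
  rw [hsr] at hcX
  have hBk := hk (N + 1) (by omega)
  have e1 : (lam ^ k₀) ^ (N + 1) = r := by rw [hr, hi, pow_mul]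
  have e2 : (lam ^ k₀) ^ (N + 1 + 1) = r * lam ^ k₀ := by rw [pow_succ _ (N + 1), e1]
  rw [e1, e2] at hBk
  set τ : ENNReal := (ENNReal.ofReal (s ^ 2 / (4 * π)))⁻¹ with hτ
  set K : ℕ → Set (Spc n) :=
    fun j => Qᶜ ∩ heatShell n X₀ (lam ^ (j + i + 1)) (lam ^ (j + i + 2)) with hK
  have hcover : heatShell n X₀ r (r * lam ^ k₀) \ Q ⊆ ⋃ j ∈ Finset.range k₀, K j := by
    rintro Y ⟨⟨hY1, hY2⟩, hYQ⟩
    rw [hr, ← pow_add] at hY2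
    obtain ⟨j, hj, h1, h2⟩ := exists_shell_index (i + 1) k₀ hk₀ hY1 hY2
    simp only [mem_iUnion, Finset.mem_range]
    refine ⟨j, hj, hYQ, ?_, ?_⟩
    · convert h1 using 2
      ring
    · convert h2 using 2
      ring
  calc ENNReal.ofReal θ * c
      ≤ ENNReal.ofReal θ * (ENNReal.ofReal r * (τ * volume (heatShell n X₀ r (r * lam ^ k₀)))) := by
        gcongr
    _ = ENNReal.ofReal r * (τ *
          (ENNReal.ofReal θ * volume (heatShell n X₀ r (r * lam ^ k₀)))) := by ring
    _ ≤ ENNReal.ofReal r * (τ * ∑ j ∈ Finset.range k₀, volume (K j)) := by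
        gcongr
        exact hBk.trans ((measure_mono hcover).trans (measure_biUnion_finset_le _ _))
    _ = ∑ j ∈ Finset.range k₀, ENNReal.ofReal r * (τ * volume (K j)) := by
        rw [Finset.mul_sum, Finset.mul_sum]
    _ ≤ _ := by
        refine Finset.sum_le_sum fun j _ => ?_
        have hrj : r ≤ lam ^ (j + i + 1) := pow_le_pow_right₀ hlam.le (by omega)
        refine mul_le_mul' (ENNReal.ofReal_le_ofReal hrj) ?_
        exact volume_le_thermalCap hn hT0 hTr X₀
          (hQ.measurableSet.compl.inter (measurableSet_heatShell n X₀ _ _))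
          fun Y hY => hrj.trans hY.2.1

end
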